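/- arXiv:1104.5295 — 4 statements merged into one kernel-verified Lean document; each statement's English description precedes it below -/
import Mathlib

section
/- Let r > 2. Let (X_i)_{i≥1} be a sequence of random variables on (Ω, 𝒜) that is IID under the upper expectation E̅, with E̅[X₁] = E̅[−X₁] = 0 and E̅[|X₁|^r] < ∞. Then there exists a constant K_r > 0, not depending on n, such that for all n ≥ 1, sup_{m≥0} E̅[|S_{m+n} − S_m|^r] ≤ K_r · n^{r/2}. -/
open MeasureTheory Filter Topology

/-- Upper expectation `E̅[X] = sup_{P ∈ 𝒬} E_P[X]` of a set of probability measures. -/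
noncomputable def upperExp {Ω : Type*} [MeasurableSpace Ω]
    (𝒬 : Set (Measure Ω)) (X : Ω → ℝ) : ℝ :=
  sSup ((fun P : Measure Ω => ∫ ω, X ω ∂P) '' 𝒬)

/-- `E̅[X]` is finite: `X` is integrable under each `P ∈ 𝒬` and the
integrals are bounded above. -/
def HasFiniteUpperExp {Ω : Type*} [MeasurableSpace Ω]
    (𝒬 : Set (Measure Ω)) (X : Ω → ℝ) : Prop :=
  (∀ P ∈ 𝒬, Integrable X P) ∧ BddAbove ((fun P : Measure Ω => ∫ ω, X ω ∂P) '' 𝒬)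

/-- Peng independence of a random variable `Y` from a random vector `X` under
the upper expectation associated with `𝒬`. -/
def PengIndep {Ω : Type*} [MeasurableSpace Ω]
    (𝒬 : Set (Measure Ω)) {d : ℕ} (X : Ω → (Fin d → ℝ)) (Y : Ω → ℝ) : Prop :=
  ∀ φ : (Fin d → ℝ) → ℝ → ℝ,
    Measurable (fun p : (Fin d → ℝ) × ℝ => φ p.1 p.2) →
    HasFiniteUpperExp 𝒬 (fun ω => φ (X ω) (Y ω)) →
    (∀ x, HasFiniteUpperExp 𝒬 (fun ω => φ x (Y ω))) →
    HasFiniteUpperExp 𝒬 (fun ω => upperExp 𝒬 (fun ω' => φ (X ω) (Y ω'))) →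
    upperExp 𝒬 (fun ω => φ (X ω) (Y ω)) =
      upperExp 𝒬 (fun ω => upperExp 𝒬 (fun ω' => φ (X ω) (Y ω')))

/-- A sequence `(X_i)` is IID under the upper expectation: each `X_i` has the
same distribution as `X_0` (tested against measurable functions with finite
expectations) and `X_{i+1}` is Peng-independent of `(X_0, …, X_i)`. -/
def IsIIDUnder {Ω : Type*} [MeasurableSpace Ω]
    (𝒬 : Set (Measure Ω)) (X : ℕ → Ω → ℝ) : Prop :=
  (∀ i, ∀ φ : ℝ → ℝ, Measurable φ →
      HasFiniteUpperExp 𝒬 (fun ω => φ (X i ω)) →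
      HasFiniteUpperExp 𝒬 (fun ω => φ (X 0 ω)) →
      upperExp 𝒬 (fun ω => φ (X i ω)) = upperExp 𝒬 (fun ω => φ (X 0 ω))) ∧
  (∀ i : ℕ, PengIndep 𝒬 (fun ω (j : Fin (i + 1)) => X (j : ℕ) ω) (X (i + 1)))

/-- Partial sum `S_n = X_0 + ⋯ + X_{n-1}` (the first `n` variables). -/
def partialSum {Ω : Type*} (X : ℕ → Ω → ℝ) (n : ℕ) (ω : Ω) : ℝ :=
  ∑ i ∈ Finset.range n, X i ω

/-!
The second-order estimate `|s + y|^r ≤ |s|^r + r |s|^(r-2) s y + C (|s|^(r-2) y² + |y|^r)` is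
applied to an increment `s = S_{m+n} - S_m` and the next variable `y`, which is independent of it.
The linear term vanishes because both `y` and `-y` have upper expectation zero, so the sign of its
coefficient does not matter, and the quadratic term factors by independence. If `M` bounds the
`r`-th moments of the variables, Lyapunov's inequality then shows that the `r`-th moments `A n` of
increments of length `n` satisfy `A (n + 1) ≤ A n + C (M^(2/r) (A n)^((r-2)/r) + M)`, and
`M (2 C n)^(r/2)` dominates any such sequence because `x ↦ x^(r/2)` lies above its tangents.
-/

section RealInequalities

lemma add_mul_rpow_sub_one_mul_sub_le_rpow {p a b : ℝ} (hp : 1 ≤ p) (ha : 0 ≤ a) (hb : 0 ≤ b) :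
    a ^ p + p * a ^ (p - 1) * (b - a) ≤ b ^ p := by
  have hp0 : 0 < p := by linarith
  have young := Real.geom_mean_le_arith_mean2_weighted (w₁ := (p - 1) / p) (w₂ := 1 / p)
    (div_nonneg (by linarith) hp0.le) (by positivity) (Real.rpow_nonneg ha p)
    (Real.rpow_nonneg hb p) (by field_simp; ring)
  rw [← Real.rpow_mul ha, ← Real.rpow_mul hb, mul_div_cancel₀ _ hp0.ne',
    mul_one_div_cancel hp0.ne', Real.rpow_one] at young
  have hap : a ^ (p - 1) * a = a ^ p := by
    rw [← Real.rpow_add_one' ha (by simpa using hp0.ne'), sub_add_cancel]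
  have hyoung : p * (a ^ (p - 1) * b) ≤ (p - 1) * a ^ p + b ^ p := by
    calc p * (a ^ (p - 1) * b) ≤ p * ((p - 1) / p * a ^ p + 1 / p * b ^ p) := by gcongr
      _ = (p - 1) * a ^ p + b ^ p := by field_simp
  linear_combination hyoung - p * hap

lemma rpow_mul_rpow_le_rpow_add_rpow {a b p q r : ℝ} (ha : 0 ≤ a) (hb : 0 ≤ b)
    (hp : 0 ≤ p) (hq : 0 ≤ q) (hpq : p + q = r) : a ^ p * b ^ q ≤ a ^ r + b ^ r := by
  calc a ^ p * b ^ q ≤ max a b ^ p * max a b ^ q := by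
        gcongr
        exacts [le_max_left a b, le_max_right a b]
    _ = max (a ^ r) (b ^ r) := by
        rw [← Real.rpow_add_of_nonneg (ha.trans (le_max_left a b)) hp hq, hpq,
          Real.rpow_max ha hb (hpq ▸ add_nonneg hp hq)]
    _ ≤ a ^ r + b ^ r := max_le_add_of_nonneg (by positivity) (by positivity)

lemma add_rpow_le_two_rpow_mul_add {a b p : ℝ} (ha : 0 ≤ a) (hb : 0 ≤ b) (hp : 0 ≤ p) :
    (a + b) ^ p ≤ 2 ^ p * (a ^ p + b ^ p) := by
  calc (a + b) ^ p ≤ (2 * max a b) ^ p := by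
        gcongr
        linarith [le_max_left a b, le_max_right a b]
    _ = 2 ^ p * max (a ^ p) (b ^ p) := by
        rw [Real.mul_rpow zero_le_two (ha.trans (le_max_left a b)), Real.rpow_max ha hb hp]
    _ ≤ 2 ^ p * (a ^ p + b ^ p) := by
        gcongr
        exact max_le_add_of_nonneg (by positivity) (by positivity)

lemma rpow_abs_mul_sq {p : ℝ} (hp : p + 2 ≠ 0) (x : ℝ) : |x| ^ p * x ^ 2 = |x| ^ (p + 2) := by
  rw [← sq_abs, ← Real.rpow_two, Real.rpow_add' (abs_nonneg x) hp]

lemma abs_rpow_abs_mul_self {p : ℝ} (hp : p + 1 ≠ 0) (x : ℝ) :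
    |(|x| ^ p * x)| = |x| ^ (p + 1) := by
  rw [abs_mul, abs_of_nonneg (by positivity : 0 ≤ |x| ^ p), Real.rpow_add_one' (abs_nonneg x) hp]

lemma abs_rpow_abs_mul_self_sub_le {p a b c : ℝ} (hp : 0 ≤ p) (ha : |a| ≤ c) (hb : |b| ≤ c) :
    |(|a| ^ p * a - |b| ^ p * b)| ≤ (p + 1) * c ^ p * |a - b| := by
  wlog hba : |b| ≤ |a| generalizing a b
  · rw [abs_sub_comm, abs_sub_comm a b]
    exact this hb ha (le_of_not_ge hba)
  have hpow : |b| ^ p ≤ |a| ^ p := by gcongr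
  have tangent := add_mul_rpow_sub_one_mul_sub_le_rpow (p := p + 1) (by linarith)
    (abs_nonneg a) (abs_nonneg b)
  rw [add_sub_cancel_right, Real.rpow_add_of_nonneg (abs_nonneg a) hp zero_le_one,
    Real.rpow_add_of_nonneg (abs_nonneg b) hp zero_le_one, Real.rpow_one, Real.rpow_one] at tangent
  calc |(|a| ^ p * a - |b| ^ p * b)|
      = |(|a| ^ p * (a - b) + (|a| ^ p - |b| ^ p) * b)| := by ring_nf
    _ ≤ |a| ^ p * |a - b| + (|a| ^ p - |b| ^ p) * |b| := by
        refine (abs_add_le _ _).trans_eq ?_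
        rw [abs_mul, abs_mul, abs_of_nonneg (by positivity : 0 ≤ |a| ^ p),
          abs_of_nonneg (sub_nonneg.2 hpow)]
    _ ≤ |a| ^ p * |a - b| + p * |a| ^ p * (|a| - |b|) := by linarith
    _ ≤ |a| ^ p * |a - b| + p * |a| ^ p * |a - b| := by
        gcongr
        exact abs_sub_abs_le_abs_sub a b
    _ = (p + 1) * |a| ^ p * |a - b| := by ring
    _ ≤ (p + 1) * c ^ p * |a - b| := by gcongr

lemma rpow_abs_add_mul_sub_le {r : ℝ} (hr : 1 < r) (t s : ℝ) :
    |t| ^ r + r * (|t| ^ (r - 2) * t * (s - t)) ≤ |s| ^ r := by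
  have hr1 : r - 1 = r - 2 + 1 := by ring
  have hr1' : r - 2 + 1 ≠ 0 := by linarith
  have hts : |t| ^ (r - 2) * t * s ≤ |t| ^ (r - 1) * |s| := by
    rw [hr1, ← abs_rpow_abs_mul_self hr1' t, ← abs_mul]
    exact le_abs_self _
  have htt : |t| ^ (r - 2) * t * t = |t| ^ (r - 1) * |t| := by
    rw [hr1, Real.rpow_add_one' (abs_nonneg t) hr1', mul_assoc, mul_assoc, abs_mul_abs_self]
  calc |t| ^ r + r * (|t| ^ (r - 2) * t * (s - t))
      ≤ |t| ^ r + r * (|t| ^ (r - 1) * |s| - |t| ^ (r - 1) * |t|) := by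
        rw [mul_sub, htt]
        gcongr
    _ = |t| ^ r + r * |t| ^ (r - 1) * (|s| - |t|) := by ring
    _ ≤ |s| ^ r := add_mul_rpow_sub_one_mul_sub_le_rpow hr.le (abs_nonneg t) (abs_nonneg s)

lemma rpow_abs_add_le {r : ℝ} (hr : 2 ≤ r) (s y : ℝ) :
    |s + y| ^ r ≤ |s| ^ r + (r * (|s| ^ (r - 2) * s * y) +
      r * (r - 1) * 2 ^ (r - 2) * (|s| ^ (r - 2) * y ^ 2 + |y| ^ r)) := by
  have hr2 : 0 ≤ r - 2 := by linarith
  set t := s + y with ht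
  have tangent : |t| ^ r ≤ |s| ^ r + r * (|t| ^ (r - 2) * t * y) := by
    have h := rpow_abs_add_mul_sub_le (by linarith : 1 < r) t s
    rw [show s - t = -y by rw [ht]; ring] at h
    linarith
  have lipschitz : |t| ^ (r - 2) * t * y - |s| ^ (r - 2) * s * y ≤
      (r - 1) * (|s| + |y|) ^ (r - 2) * y ^ 2 := by
    calc |t| ^ (r - 2) * t * y - |s| ^ (r - 2) * s * y
        ≤ |(|t| ^ (r - 2) * t - |s| ^ (r - 2) * s)| * |y| := by
          rw [← sub_mul, ← abs_mul]
          exact le_abs_self _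
      _ ≤ (r - 2 + 1) * (|s| + |y|) ^ (r - 2) * |t - s| * |y| := by
          gcongr
          exact abs_rpow_abs_mul_self_sub_le hr2 (abs_add_le s y)
            (le_add_of_nonneg_right (abs_nonneg y))
      _ = (r - 1) * (|s| + |y|) ^ (r - 2) * y ^ 2 := by
          rw [ht, add_sub_cancel_left, mul_assoc, abs_mul_abs_self]
          ring
  have remainder : (|s| + |y|) ^ (r - 2) * y ^ 2 ≤
      2 ^ (r - 2) * (|s| ^ (r - 2) * y ^ 2 + |y| ^ r) := by
    calc (|s| + |y|) ^ (r - 2) * y ^ 2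
        ≤ 2 ^ (r - 2) * (|s| ^ (r - 2) + |y| ^ (r - 2)) * y ^ 2 := by
          gcongr
          exact add_rpow_le_two_rpow_mul_add (abs_nonneg s) (abs_nonneg y) hr2
      _ = 2 ^ (r - 2) * (|s| ^ (r - 2) * y ^ 2 + |y| ^ r) := by
          rw [mul_assoc, add_mul, rpow_abs_mul_sq (by linarith), sub_add_cancel]
  calc |t| ^ r ≤ |s| ^ r + r * (|t| ^ (r - 2) * t * y) := tangent
    _ ≤ |s| ^ r + r * (|s| ^ (r - 2) * s * y +
          (r - 1) * (2 ^ (r - 2) * (|s| ^ (r - 2) * y ^ 2 + |y| ^ r))) := by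
        have hr1 : 0 ≤ r - 1 := by linarith
        gcongr
        linarith [mul_le_mul_of_nonneg_left remainder hr1]
    _ = _ := by ring

lemma one_le_mul_sub_one_mul_two_rpow {r : ℝ} (hr : 2 ≤ r) : 1 ≤ r * (r - 1) * 2 ^ (r - 2) :=
  one_le_mul_of_one_le_of_one_le
    (one_le_mul_of_one_le_of_one_le (by linarith) (by linarith))
    (Real.one_le_rpow one_le_two (by linarith))

lemma rpow_add_mul_rpow_sub_one_add_one_le {p a c : ℝ} (hp : 1 ≤ p) (ha : 1 ≤ a) (hc : 0 ≤ c) :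
    a ^ p + c * (a ^ (p - 1) + 1) ≤ (a + 2 * c) ^ p := by
  have ha1 : 1 ≤ a ^ (p - 1) := Real.one_le_rpow ha (by linarith)
  calc a ^ p + c * (a ^ (p - 1) + 1) ≤ a ^ p + c * (a ^ (p - 1) + a ^ (p - 1)) := by gcongr
    _ = a ^ p + 1 * a ^ (p - 1) * (a + 2 * c - a) := by ring
    _ ≤ a ^ p + p * a ^ (p - 1) * (a + 2 * c - a) := by
        gcongr
        linarith
    _ ≤ (a + 2 * c) ^ p :=
        add_mul_rpow_sub_one_mul_sub_le_rpow hp (by linarith) (by positivity)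

lemma rpow_mul_rpow_one_sub_add_le {r A M a c : ℝ} (hr : 2 ≤ r) (hA : 0 ≤ A) (hM : 0 ≤ M)
    (ha : 1 ≤ a) (hc : 0 ≤ c) (hAM : A ≤ M * a ^ (r / 2)) :
    A + c * (M ^ (2 / r) * A ^ ((r - 2) / r) + M) ≤ M * (a + 2 * c) ^ (r / 2) := by
  have hr0 : 0 < r := by linarith
  have ha0 : 0 ≤ a := by linarith
  have holder : M ^ (2 / r) * A ^ ((r - 2) / r) ≤ M * a ^ (r / 2 - 1) := by
    calc M ^ (2 / r) * A ^ ((r - 2) / r)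
        ≤ M ^ (2 / r) * (M * a ^ (r / 2)) ^ ((r - 2) / r) := by gcongr
      _ = M ^ (2 / r + (r - 2) / r) * a ^ (r / 2 * ((r - 2) / r)) := by
          rw [Real.mul_rpow hM (by positivity), ← Real.rpow_mul ha0, ← mul_assoc,
            Real.rpow_add_of_nonneg hM (by positivity) (div_nonneg (by linarith) hr0.le)]
      _ = M * a ^ (r / 2 - 1) := by
          rw [show 2 / r + (r - 2) / r = 1 by field_simp; ring, Real.rpow_one,
            show r / 2 * ((r - 2) / r) = r / 2 - 1 by field_simp]
  calc A + c * (M ^ (2 / r) * A ^ ((r - 2) / r) + M)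
      ≤ M * a ^ (r / 2) + c * (M * a ^ (r / 2 - 1) + M) := by gcongr
    _ = M * (a ^ (r / 2) + c * (a ^ (r / 2 - 1) + 1)) := by ring
    _ ≤ M * (a + 2 * c) ^ (r / 2) := by
        gcongr
        exact rpow_add_mul_rpow_sub_one_add_one_le (by linarith) ha hc

lemma le_mul_rpow_of_succ_le {A : ℕ → ℝ} {r M c : ℝ} (hr : 2 ≤ r) (hc : 1 ≤ 2 * c)
    (hA : ∀ n, 0 ≤ A n) (hA0 : A 0 ≤ M)
    (hsucc : ∀ n, A (n + 1) ≤ A n + c * (M ^ (2 / r) * A n ^ ((r - 2) / r) + M)) (n : ℕ) :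
    A n ≤ M * (2 * c * (n + 1 : ℕ)) ^ (r / 2) := by
  have hM : 0 ≤ M := (hA 0).trans hA0
  induction n with
  | zero =>
    rw [zero_add, Nat.cast_one, mul_one]
    exact hA0.trans (le_mul_of_one_le_right hM (Real.one_le_rpow hc (by linarith)))
  | succ n ih =>
    have hn : 1 ≤ 2 * c * (n + 1 : ℕ) :=
      one_le_mul_of_one_le_of_one_le hc (Nat.one_le_cast.2 n.succ_pos)
    calc A (n + 1) ≤ A n + c * (M ^ (2 / r) * A n ^ ((r - 2) / r) + M) := hsucc n
      _ ≤ M * (2 * c * (n + 1 : ℕ) + 2 * c) ^ (r / 2) :=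
        rpow_mul_rpow_one_sub_add_le hr (hA n) hM hn (by linarith) ih
      _ = M * (2 * c * (n + 1 + 1 : ℕ)) ^ (r / 2) := by
        rw [Nat.cast_add_one (n + 1), mul_add_one]

end RealInequalities

section UpperExpectation

variable {Ω : Type*} [MeasurableSpace Ω] {𝒬 : Set (Measure Ω)} {Y Z : Ω → ℝ}

lemma HasFiniteUpperExp.integral_le_upperExp (hY : HasFiniteUpperExp 𝒬 Y) {P : Measure Ω}
    (hP : P ∈ 𝒬) : ∫ ω, Y ω ∂P ≤ upperExp 𝒬 Y :=
  le_csSup hY.2 ⟨P, hP, rfl⟩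

lemma upperExp_le (h𝒬 : 𝒬.Nonempty) {c : ℝ} (h : ∀ P ∈ 𝒬, ∫ ω, Y ω ∂P ≤ c) :
    upperExp 𝒬 Y ≤ c :=
  csSup_le (h𝒬.image _) (Set.forall_mem_image.2 h)

lemma hasFiniteUpperExp_of_integral_le {c : ℝ} (hY : ∀ P ∈ 𝒬, Integrable Y P)
    (h : ∀ P ∈ 𝒬, ∫ ω, Y ω ∂P ≤ c) : HasFiniteUpperExp 𝒬 Y :=
  ⟨hY, c, Set.forall_mem_image.2 h⟩

lemma HasFiniteUpperExp.of_abs_le (hY : HasFiniteUpperExp 𝒬 Y) (hZ : Measurable Z)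
    (h : ∀ ω, |Z ω| ≤ Y ω) : HasFiniteUpperExp 𝒬 Z := by
  have hint : ∀ P ∈ 𝒬, Integrable Z P := fun P hP ↦
    (hY.1 P hP).mono' hZ.aestronglyMeasurable (.of_forall h)
  exact hasFiniteUpperExp_of_integral_le hint fun P hP ↦
    (integral_mono (hint P hP) (hY.1 P hP) fun ω ↦ (le_abs_self _).trans (h ω)).trans
      (hY.integral_le_upperExp hP)

lemma HasFiniteUpperExp.zero : HasFiniteUpperExp 𝒬 (fun _ ↦ 0) :=
  hasFiniteUpperExp_of_integral_le (fun P _ ↦ integrable_zero Ω ℝ P) fun _ _ ↦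
    (integral_zero Ω ℝ).le

lemma HasFiniteUpperExp.add (hY : HasFiniteUpperExp 𝒬 Y) (hZ : HasFiniteUpperExp 𝒬 Z) :
    HasFiniteUpperExp 𝒬 (fun ω ↦ Y ω + Z ω) :=
  hasFiniteUpperExp_of_integral_le (fun P hP ↦ (hY.1 P hP).add (hZ.1 P hP)) fun P hP ↦
    (integral_add (hY.1 P hP) (hZ.1 P hP)).trans_le
      (add_le_add (hY.integral_le_upperExp hP) (hZ.integral_le_upperExp hP))

lemma HasFiniteUpperExp.const_mul (hY : HasFiniteUpperExp 𝒬 Y) {c : ℝ} (hc : 0 ≤ c) :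
    HasFiniteUpperExp 𝒬 (fun ω ↦ c * Y ω) :=
  hasFiniteUpperExp_of_integral_le (fun P hP ↦ (hY.1 P hP).const_mul c) fun _ hP ↦
    (integral_const_mul c Y).trans_le
      (mul_le_mul_of_nonneg_left (hY.integral_le_upperExp hP) hc)

lemma upperExp_mono (h𝒬 : 𝒬.Nonempty) (hY : HasFiniteUpperExp 𝒬 Y) (hZ : HasFiniteUpperExp 𝒬 Z)
    (h : ∀ ω, Y ω ≤ Z ω) : upperExp 𝒬 Y ≤ upperExp 𝒬 Z :=
  upperExp_le h𝒬 fun P hP ↦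
    (integral_mono (hY.1 P hP) (hZ.1 P hP) h).trans (hZ.integral_le_upperExp hP)

lemma upperExp_nonneg (h : ∀ ω, 0 ≤ Y ω) : 0 ≤ upperExp 𝒬 Y :=
  Real.sSup_nonneg (Set.forall_mem_image.2 fun _ _ ↦ integral_nonneg h)

lemma upperExp_zero : upperExp 𝒬 (fun _ ↦ 0) = 0 :=
  (Real.sSup_nonpos (Set.forall_mem_image.2 fun _ _ ↦ (integral_zero _ _).le)).antisymm
    (upperExp_nonneg fun _ ↦ le_rfl)

lemma upperExp_add_le (h𝒬 : 𝒬.Nonempty) (hY : HasFiniteUpperExp 𝒬 Y)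
    (hZ : HasFiniteUpperExp 𝒬 Z) :
    upperExp 𝒬 (fun ω ↦ Y ω + Z ω) ≤ upperExp 𝒬 Y + upperExp 𝒬 Z :=
  upperExp_le h𝒬 fun P hP ↦
    (integral_add (hY.1 P hP) (hZ.1 P hP)).trans_le
      (add_le_add (hY.integral_le_upperExp hP) (hZ.integral_le_upperExp hP))

lemma upperExp_const_mul {c : ℝ} (hc : 0 ≤ c) (Y : Ω → ℝ) :
    upperExp 𝒬 (fun ω ↦ c * Y ω) = c * upperExp 𝒬 Y := by
  simp only [upperExp, sSup_image', integral_const_mul, Real.mul_iSup_of_nonneg hc]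

lemma upperExp_const_mul_eq_zero (hY : upperExp 𝒬 Y = 0) (hY' : upperExp 𝒬 (fun ω ↦ -Y ω) = 0)
    (c : ℝ) : upperExp 𝒬 (fun ω ↦ c * Y ω) = 0 := by
  rcases le_total 0 c with hc | hc
  · rw [upperExp_const_mul hc, hY, mul_zero]
  · simpa only [neg_mul_neg, hY', mul_zero] using
      upperExp_const_mul (𝒬 := 𝒬) (neg_nonneg.2 hc) (fun ω ↦ -Y ω)

variable {p r : ℝ}

lemma integrable_rpow_of_le_one {P : Measure Ω} [IsFiniteMeasure P]
    (hZ : Integrable Z P) (hZ0 : ∀ ω, 0 ≤ Z ω) (hp0 : 0 ≤ p) (hp1 : p ≤ 1) :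
    Integrable (fun ω ↦ Z ω ^ p) P := by
  refine ((integrable_const (1 - p)).add (hZ.const_mul p)).mono'
    (hZ.aemeasurable.pow_const p).aestronglyMeasurable (.of_forall fun ω ↦ ?_)
  have bernoulli := rpow_one_add_le_one_add_mul_self (s := Z ω - 1)
    (by linarith [hZ0 ω]) hp0 hp1
  rw [add_sub_cancel] at bernoulli
  rw [Real.norm_of_nonneg (Real.rpow_nonneg (hZ0 ω) p), Pi.add_apply]
  linarith

lemma integral_rpow_le_rpow_integral {P : Measure Ω} [IsProbabilityMeasure P]
    (hZ : Integrable Z P) (hZ0 : ∀ ω, 0 ≤ Z ω) (hp0 : 0 ≤ p) (hp1 : p ≤ 1) :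
    ∫ ω, Z ω ^ p ∂P ≤ (∫ ω, Z ω ∂P) ^ p :=
  (Real.concaveOn_rpow hp0 hp1).le_map_integral (Real.continuous_rpow_const hp0).continuousOn
    isClosed_Ici (.of_forall hZ0) hZ (integrable_rpow_of_le_one hZ hZ0 hp0 hp1)

lemma HasFiniteUpperExp.integrable_and_integral_rpow_abs_le
    (hprob : ∀ P ∈ 𝒬, IsProbabilityMeasure P)
    (hY : HasFiniteUpperExp 𝒬 (fun ω ↦ |Y ω| ^ r)) (hr : 0 < r) (hp : 0 ≤ p) (hpr : p ≤ r) :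
    ∀ P ∈ 𝒬, Integrable (fun ω ↦ |Y ω| ^ p) P ∧
      ∫ ω, |Y ω| ^ p ∂P ≤ upperExp 𝒬 (fun ω ↦ |Y ω| ^ r) ^ (p / r) := by
  intro P hP
  have := hprob P hP
  have hq0 : 0 ≤ p / r := by positivity
  have hq1 : p / r ≤ 1 := (div_le_one hr).2 hpr
  have hpow : ∀ ω, |Y ω| ^ p = (|Y ω| ^ r) ^ (p / r) := fun ω ↦ by
    rw [← Real.rpow_mul (abs_nonneg _), mul_div_cancel₀ p hr.ne']
  have hnn : ∀ ω, 0 ≤ |Y ω| ^ r := fun ω ↦ by positivity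
  simp only [hpow]
  refine ⟨integrable_rpow_of_le_one (hY.1 P hP) hnn hq0 hq1,
    (integral_rpow_le_rpow_integral (hY.1 P hP) hnn hq0 hq1).trans ?_⟩
  gcongr
  exact hY.integral_le_upperExp hP

lemma HasFiniteUpperExp.rpow_abs_of_le (hprob : ∀ P ∈ 𝒬, IsProbabilityMeasure P)
    (hY : HasFiniteUpperExp 𝒬 (fun ω ↦ |Y ω| ^ r)) (hr : 0 < r) (hp : 0 ≤ p) (hpr : p ≤ r) :
    HasFiniteUpperExp 𝒬 (fun ω ↦ |Y ω| ^ p) :=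
  hasFiniteUpperExp_of_integral_le
    (fun P hP ↦ (hY.integrable_and_integral_rpow_abs_le hprob hr hp hpr P hP).1)
    fun P hP ↦ (hY.integrable_and_integral_rpow_abs_le hprob hr hp hpr P hP).2

lemma upperExp_rpow_abs_le_rpow (h𝒬 : 𝒬.Nonempty) (hprob : ∀ P ∈ 𝒬, IsProbabilityMeasure P)
    (hY : HasFiniteUpperExp 𝒬 (fun ω ↦ |Y ω| ^ r)) (hr : 0 < r) (hp : 0 ≤ p) (hpr : p ≤ r) :
    upperExp 𝒬 (fun ω ↦ |Y ω| ^ p) ≤ upperExp 𝒬 (fun ω ↦ |Y ω| ^ r) ^ (p / r) :=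
  upperExp_le h𝒬 fun P hP ↦ (hY.integrable_and_integral_rpow_abs_le hprob hr hp hpr P hP).2

lemma HasFiniteUpperExp.abs_of_rpow_abs (hprob : ∀ P ∈ 𝒬, IsProbabilityMeasure P)
    (hY : HasFiniteUpperExp 𝒬 (fun ω ↦ |Y ω| ^ r)) (hr : 1 ≤ r) :
    HasFiniteUpperExp 𝒬 (fun ω ↦ |Y ω|) := by
  simpa only [Real.rpow_one] using hY.rpow_abs_of_le hprob (by linarith) zero_le_one hr

end UpperExpectation

section PengIndependence

variable {Ω : Type*} [MeasurableSpace Ω] {𝒬 : Set (Measure Ω)} {d : ℕ} {V : Ω → Fin d → ℝ}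
  {Y : Ω → ℝ}

lemma PengIndep.comp {e : ℕ} (h : PengIndep 𝒬 V Y) {s : (Fin d → ℝ) → Fin e → ℝ}
    (hs : Measurable s) : PengIndep 𝒬 (fun ω ↦ s (V ω)) Y :=
  fun φ hφ hfin hsec hupper ↦ h (fun x y ↦ φ (s x) y)
    (hφ.comp (hs.prodMap measurable_id)) hfin (fun x ↦ hsec (s x)) hupper

lemma PengIndep.upperExp_mul_eq_zero (h : PengIndep 𝒬 V Y) {f : (Fin d → ℝ) → ℝ}
    (hf : Measurable f) (hY : Measurable Y) (hYfin : HasFiniteUpperExp 𝒬 (fun ω ↦ |Y ω|))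
    (hmean : upperExp 𝒬 Y = 0) (hmean' : upperExp 𝒬 (fun ω ↦ -Y ω) = 0)
    (hfin : HasFiniteUpperExp 𝒬 (fun ω ↦ f (V ω) * Y ω)) :
    upperExp 𝒬 (fun ω ↦ f (V ω) * Y ω) = 0 := by
  have hsec : ∀ c : ℝ, HasFiniteUpperExp 𝒬 (fun ω ↦ c * Y ω) := fun c ↦
    (hYfin.const_mul (abs_nonneg c)).of_abs_le (hY.const_mul c) fun ω ↦ (abs_mul _ _).le
  have hzero := upperExp_const_mul_eq_zero hmean hmean'
  rw [h (fun x y ↦ f x * y) (by fun_prop) hfin (fun x ↦ hsec (f x))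
    (by simpa only [hzero] using HasFiniteUpperExp.zero)]
  simp only [hzero, upperExp_zero]

lemma PengIndep.upperExp_mul (h : PengIndep 𝒬 V Y) {f : (Fin d → ℝ) → ℝ} {g : ℝ → ℝ}
    (hf : Measurable f) (hf0 : ∀ x, 0 ≤ f x) (hg : Measurable g)
    (hg0 : 0 ≤ upperExp 𝒬 (fun ω ↦ g (Y ω)))
    (hfV : HasFiniteUpperExp 𝒬 (fun ω ↦ f (V ω))) (hgY : HasFiniteUpperExp 𝒬 (fun ω ↦ g (Y ω)))
    (hfin : HasFiniteUpperExp 𝒬 (fun ω ↦ f (V ω) * g (Y ω))) :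
    upperExp 𝒬 (fun ω ↦ f (V ω) * g (Y ω)) =
      upperExp 𝒬 (fun ω ↦ g (Y ω)) * upperExp 𝒬 (fun ω ↦ f (V ω)) := by
  have hinner : ∀ x, upperExp 𝒬 (fun ω ↦ f x * g (Y ω)) = upperExp 𝒬 (fun ω ↦ g (Y ω)) * f x :=
    fun x ↦ (upperExp_const_mul (hf0 x) _).trans (mul_comm _ _)
  rw [h (fun x y ↦ f x * g y) (by fun_prop) hfin (fun x ↦ hgY.const_mul (hf0 x))
    (by simpa only [hinner] using hfV.const_mul hg0)]
  simp only [hinner, upperExp_const_mul hg0]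

end PengIndependence

section MomentBound

variable {Ω : Type*} [MeasurableSpace Ω] {𝒬 : Set (Measure Ω)}

section OneStep

variable {T Y : Ω → ℝ} {r : ℝ}

lemma HasFiniteUpperExp.rpow_abs_mul_self_mul (hT : Measurable T) (hY : Measurable Y)
    (hTr : HasFiniteUpperExp 𝒬 (fun ω ↦ |T ω| ^ r))
    (hYr : HasFiniteUpperExp 𝒬 (fun ω ↦ |Y ω| ^ r)) (hr : 2 ≤ r) :
    HasFiniteUpperExp 𝒬 (fun ω ↦ |T ω| ^ (r - 2) * T ω * Y ω) := by
  refine (hTr.add hYr).of_abs_le (by fun_prop) fun ω ↦ ?_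
  have young := rpow_mul_rpow_le_rpow_add_rpow (abs_nonneg (T ω)) (abs_nonneg (Y ω))
    (by linarith : 0 ≤ r - 2 + 1) zero_le_one (by ring)
  rwa [Real.rpow_one, ← abs_rpow_abs_mul_self (by linarith), ← abs_mul] at young

lemma HasFiniteUpperExp.rpow_abs_mul_sq (hT : Measurable T) (hY : Measurable Y)
    (hTr : HasFiniteUpperExp 𝒬 (fun ω ↦ |T ω| ^ r))
    (hYr : HasFiniteUpperExp 𝒬 (fun ω ↦ |Y ω| ^ r)) (hr : 2 ≤ r) :
    HasFiniteUpperExp 𝒬 (fun ω ↦ |T ω| ^ (r - 2) * Y ω ^ 2) := by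
  refine (hTr.add hYr).of_abs_le (by fun_prop) fun ω ↦ ?_
  have young := rpow_mul_rpow_le_rpow_add_rpow (abs_nonneg (T ω)) (abs_nonneg (Y ω))
    (by linarith : 0 ≤ r - 2) zero_le_two (by ring)
  rw [abs_of_nonneg (by positivity)]
  rwa [Real.rpow_two, sq_abs] at young

lemma PengIndep.upperExp_rpow_abs_mul_sq_le (h𝒬 : 𝒬.Nonempty)
    (hprob : ∀ P ∈ 𝒬, IsProbabilityMeasure P) (hT : Measurable T) (hY : Measurable Y)
    (hind : PengIndep 𝒬 (fun ω (_ : Fin 1) ↦ T ω) Y)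
    (hTr : HasFiniteUpperExp 𝒬 (fun ω ↦ |T ω| ^ r))
    (hYr : HasFiniteUpperExp 𝒬 (fun ω ↦ |Y ω| ^ r)) (hr : 2 ≤ r) :
    upperExp 𝒬 (fun ω ↦ |T ω| ^ (r - 2) * Y ω ^ 2) ≤
      upperExp 𝒬 (fun ω ↦ |Y ω| ^ r) ^ (2 / r) *
        upperExp 𝒬 (fun ω ↦ |T ω| ^ r) ^ ((r - 2) / r) := by
  have hr0 : 0 < r := by linarith
  have hr2 : 0 ≤ r - 2 := by linarith
  have hsq : ∀ ω, Y ω ^ 2 = |Y ω| ^ (2 : ℝ) := fun ω ↦ by rw [Real.rpow_two, sq_abs]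
  have hfin := hTr.rpow_abs_mul_sq hT hY hYr hr
  simp only [hsq] at hfin ⊢
  rw [hind.upperExp_mul (f := fun x ↦ |x 0| ^ (r - 2)) (g := fun y ↦ |y| ^ (2 : ℝ)) (by fun_prop)
    (fun x ↦ by positivity) (by fun_prop) (upperExp_nonneg fun ω ↦ by positivity)
    (hTr.rpow_abs_of_le hprob hr0 hr2 (by linarith))
    (hYr.rpow_abs_of_le hprob hr0 zero_le_two hr) hfin]
  gcongr
  · exact upperExp_nonneg fun ω ↦ by positivity
  · exact Real.rpow_nonneg (upperExp_nonneg fun ω ↦ by positivity) _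
  · exact upperExp_rpow_abs_le_rpow h𝒬 hprob hYr hr0 zero_le_two hr
  · exact upperExp_rpow_abs_le_rpow h𝒬 hprob hTr hr0 hr2 (by linarith)

lemma HasFiniteUpperExp.rpow_abs_add (hT : Measurable T) (hY : Measurable Y)
    (hTr : HasFiniteUpperExp 𝒬 (fun ω ↦ |T ω| ^ r))
    (hYr : HasFiniteUpperExp 𝒬 (fun ω ↦ |Y ω| ^ r)) (hr : 0 ≤ r) :
    HasFiniteUpperExp 𝒬 (fun ω ↦ |T ω + Y ω| ^ r) := by
  refine ((hTr.add hYr).const_mul (Real.rpow_nonneg zero_le_two r)).of_abs_le (by fun_prop)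
    fun ω ↦ ?_
  rw [abs_of_nonneg (by positivity)]
  exact (Real.rpow_le_rpow (abs_nonneg _) (abs_add_le _ _) hr).trans
    (add_rpow_le_two_rpow_mul_add (abs_nonneg _) (abs_nonneg _) hr)

lemma PengIndep.upperExp_rpow_abs_add_le (h𝒬 : 𝒬.Nonempty)
    (hprob : ∀ P ∈ 𝒬, IsProbabilityMeasure P) (hT : Measurable T) (hY : Measurable Y)
    (hind : PengIndep 𝒬 (fun ω (_ : Fin 1) ↦ T ω) Y)
    (hmean : upperExp 𝒬 Y = 0) (hmean' : upperExp 𝒬 (fun ω ↦ -Y ω) = 0)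
    (hTr : HasFiniteUpperExp 𝒬 (fun ω ↦ |T ω| ^ r))
    (hYr : HasFiniteUpperExp 𝒬 (fun ω ↦ |Y ω| ^ r)) (hr : 2 ≤ r) :
    upperExp 𝒬 (fun ω ↦ |T ω + Y ω| ^ r) ≤ upperExp 𝒬 (fun ω ↦ |T ω| ^ r) +
      r * (r - 1) * 2 ^ (r - 2) *
        (upperExp 𝒬 (fun ω ↦ |Y ω| ^ r) ^ (2 / r) *
          upperExp 𝒬 (fun ω ↦ |T ω| ^ r) ^ ((r - 2) / r) + upperExp 𝒬 (fun ω ↦ |Y ω| ^ r)) := by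
  have hr0 : 0 ≤ r := by linarith
  set c := r * (r - 1) * 2 ^ (r - 2)
  have hc : 0 ≤ c := zero_le_one.trans (one_le_mul_sub_one_mul_two_rpow hr)
  have hlin := hTr.rpow_abs_mul_self_mul hT hY hYr hr
  have hquad := hTr.rpow_abs_mul_sq hT hY hYr hr
  have hrem := (hquad.add hYr).const_mul hc
  have hlin0 : upperExp 𝒬 (fun ω ↦ |T ω| ^ (r - 2) * T ω * Y ω) = 0 :=
    hind.upperExp_mul_eq_zero (f := fun x ↦ |x 0| ^ (r - 2) * x 0) (by fun_prop) hY
      (hYr.abs_of_rpow_abs hprob (by linarith)) hmean hmean' hlin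
  calc upperExp 𝒬 (fun ω ↦ |T ω + Y ω| ^ r)
      ≤ upperExp 𝒬 (fun ω ↦ |T ω| ^ r + (r * (|T ω| ^ (r - 2) * T ω * Y ω) +
          c * (|T ω| ^ (r - 2) * Y ω ^ 2 + |Y ω| ^ r))) :=
        upperExp_mono h𝒬 (hTr.rpow_abs_add hT hY hYr hr0)
          (hTr.add ((hlin.const_mul hr0).add hrem)) fun ω ↦ rpow_abs_add_le hr (T ω) (Y ω)
    _ ≤ upperExp 𝒬 (fun ω ↦ |T ω| ^ r) +
          (upperExp 𝒬 (fun ω ↦ r * (|T ω| ^ (r - 2) * T ω * Y ω)) +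
            upperExp 𝒬 (fun ω ↦ c * (|T ω| ^ (r - 2) * Y ω ^ 2 + |Y ω| ^ r))) := by
        grw [upperExp_add_le h𝒬 hTr ((hlin.const_mul hr0).add hrem),
          upperExp_add_le h𝒬 (hlin.const_mul hr0) hrem]
    _ = upperExp 𝒬 (fun ω ↦ |T ω| ^ r) +
          c * upperExp 𝒬 (fun ω ↦ |T ω| ^ (r - 2) * Y ω ^ 2 + |Y ω| ^ r) := by
        rw [upperExp_const_mul hr0, upperExp_const_mul hc, hlin0, mul_zero, zero_add]
    _ ≤ _ := by
        grw [upperExp_add_le h𝒬 hquad hYr,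
          hind.upperExp_rpow_abs_mul_sq_le h𝒬 hprob hT hY hTr hYr hr]

end OneStep

lemma partialSum_add_succ_sub {Ω : Type*} (X : ℕ → Ω → ℝ) (m n : ℕ) (ω : Ω) :
    partialSum X (m + (n + 1)) ω - partialSum X m ω =
      partialSum X (m + n) ω - partialSum X m ω + X (m + n) ω := by
  rw [← add_assoc, partialSum, Finset.sum_range_succ]
  exact add_sub_right_comm _ _ _

lemma measurable_partialSum {X : ℕ → Ω → ℝ} (hX : ∀ i, Measurable (X i)) (n : ℕ) :
    Measurable (partialSum X n) :=
  Finset.measurable_fun_sum _ fun i _ ↦ hX i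

lemma PengIndep.partialSum_sub {X : ℕ → Ω → ℝ} {m n : ℕ}
    (h : PengIndep 𝒬 (fun ω (j : Fin (m + n)) ↦ X j ω) (X (m + n))) :
    PengIndep 𝒬 (fun ω (_ : Fin 1) ↦ partialSum X (m + n) ω - partialSum X m ω) (X (m + n)) := by
  have hsum : ∀ ω, partialSum X (m + n) ω - partialSum X m ω =
      ∑ k : Fin n, X (Fin.natAdd m k : Fin (m + n)) ω := fun ω ↦ by
    rw [partialSum, partialSum, Finset.sum_range_add, add_sub_cancel_left, Finset.sum_range]
    rfl
  simp only [hsum]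
  exact h.comp (s := fun x _ ↦ ∑ k : Fin n, x (Fin.natAdd m k)) (by fun_prop)

lemma hasFiniteUpperExp_rpow_abs_partialSum_sub {X : ℕ → Ω → ℝ} {r : ℝ} (hr : 0 < r)
    (hmeas : ∀ i, Measurable (X i)) (hmom : ∀ i, HasFiniteUpperExp 𝒬 (fun ω ↦ |X i ω| ^ r))
    (m n : ℕ) :
    HasFiniteUpperExp 𝒬 (fun ω ↦ |partialSum X (m + n) ω - partialSum X m ω| ^ r) := by
  induction n with
  | zero => simpa only [add_zero, sub_self, abs_zero, Real.zero_rpow hr.ne'] using .zero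
  | succ n ih =>
    simp only [partialSum_add_succ_sub]
    exact ih.rpow_abs_add ((measurable_partialSum hmeas _).sub (measurable_partialSum hmeas _))
      (hmeas _) (hmom _) hr.le

lemma IsIIDUnder.upperExp_comp_eq {X : ℕ → Ω → ℝ} (hiid : IsIIDUnder 𝒬 X)
    (hmeas : ∀ i, Measurable (X i)) (habs : ∀ i, HasFiniteUpperExp 𝒬 (fun ω ↦ |X i ω|))
    {φ : ℝ → ℝ} (hφ : Measurable φ) (hφ_le : ∀ x, |φ x| ≤ |x|) (i : ℕ) :
    upperExp 𝒬 (fun ω ↦ φ (X i ω)) = upperExp 𝒬 (fun ω ↦ φ (X 0 ω)) :=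
  have hfin (k : ℕ) : HasFiniteUpperExp 𝒬 (fun ω ↦ φ (X k ω)) :=
    (habs k).of_abs_le (hφ.comp (hmeas k)) fun ω ↦ hφ_le (X k ω)
  hiid.1 i φ hφ (hfin i) (hfin 0)

theorem moment_bound_IID_general {X : ℕ → Ω → ℝ} (h𝒬 : 𝒬.Nonempty)
    (hprob : ∀ P ∈ 𝒬, IsProbabilityMeasure P) (hmeas : ∀ i, Measurable (X i))
    (hindep : ∀ i : ℕ, PengIndep 𝒬 (fun ω (j : Fin (i + 1)) ↦ X j ω) (X (i + 1)))
    {r : ℝ} (hr : 2 ≤ r) (hmean : ∀ i, upperExp 𝒬 (X i) = 0)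
    (hmean' : ∀ i, upperExp 𝒬 (fun ω ↦ -X i ω) = 0)
    (hmom : ∀ i, HasFiniteUpperExp 𝒬 (fun ω ↦ |X i ω| ^ r)) {M : ℝ}
    (hM : ∀ i, upperExp 𝒬 (fun ω ↦ |X i ω| ^ r) ≤ M) (m n : ℕ) :
    HasFiniteUpperExp 𝒬 (fun ω ↦ |partialSum X (m + n) ω - partialSum X m ω| ^ r) ∧
      upperExp 𝒬 (fun ω ↦ |partialSum X (m + n) ω - partialSum X m ω| ^ r) ≤
        M * (2 * (r * (r - 1) * 2 ^ (r - 2))) ^ (r / 2) * (n : ℝ) ^ (r / 2) := by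
  have hfin := hasFiniteUpperExp_rpow_abs_partialSum_sub (by linarith) hmeas hmom m
  refine ⟨hfin n, ?_⟩
  have hc := one_le_mul_sub_one_mul_two_rpow hr
  rw [mul_assoc M, ← Real.mul_rpow (by linarith) n.cast_nonneg]
  rcases n with _ | n
  · simp [upperExp_zero, Real.zero_rpow (by linarith : r ≠ 0),
      Real.zero_rpow (by linarith : r / 2 ≠ 0)]
  have hmeasS (k : ℕ) : Measurable (fun ω ↦ partialSum X (m + k) ω - partialSum X m ω) :=
    (measurable_partialSum hmeas _).sub (measurable_partialSum hmeas m)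
  refine le_mul_rpow_of_succ_le (A := fun k ↦ upperExp 𝒬 fun ω ↦
    |partialSum X (m + (k + 1)) ω - partialSum X m ω| ^ r) hr (by linarith)
    (fun k ↦ upperExp_nonneg fun ω ↦ by positivity) ?_ (fun k ↦ ?_) n
  · simpa only [partialSum_add_succ_sub, add_zero, sub_self, zero_add] using hM m
  · have step := (hindep (m + k)).partialSum_sub (n := k + 1) |>.upperExp_rpow_abs_add_le h𝒬 hprob
      (hmeasS (k + 1)) (hmeas _) (hmean _) (hmean' _) (hfin (k + 1)) (hmom _) hr
    simp only [partialSum_add_succ_sub X m (k + 1)]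
    refine step.trans ?_
    gcongr
    · exact Real.rpow_nonneg (upperExp_nonneg fun ω ↦ by positivity) _
    · exact upperExp_nonneg fun ω ↦ by positivity
    · exact hM _
    · exact hM _

end MomentBound

/-- **Theorem 3.1** (moment bound). If `(X_i)` is IID under `E̅`, centered
(`E̅[X_1] = E̅[-X_1] = 0`), and `E̅[|X_1|^r] < ∞` for some `r > 2`, then there is
a constant `K_r > 0`, not depending on `n`, such that
`sup_{m ≥ 0} E̅[|S_{m+n} - S_m|^r] ≤ K_r n^{r/2}` for all `n ≥ 1`. -/
theorem moment_bound_IID {Ω : Type*} [MeasurableSpace Ω]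
    (𝒬 : Set (Measure Ω)) (h𝒬 : 𝒬.Nonempty)
    (hprob : ∀ P ∈ 𝒬, IsProbabilityMeasure P)
    (X : ℕ → Ω → ℝ) (hmeas : ∀ i, Measurable (X i))
    (hiid : IsIIDUnder 𝒬 X)
    (r : ℝ) (hr : 2 < r)
    (hmean : upperExp 𝒬 (X 0) = 0)
    (hmean' : upperExp 𝒬 (fun ω => -X 0 ω) = 0)
    (hmom : HasFiniteUpperExp 𝒬 (fun ω => |X 0 ω| ^ r))
    (hfin : ∀ m n : ℕ, HasFiniteUpperExp 𝒬
      (fun ω => |partialSum X (m + n) ω - partialSum X m ω| ^ r)) :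
    ∃ K : ℝ, 0 < K ∧ ∀ n : ℕ, 1 ≤ n → ∀ m : ℕ,
      upperExp 𝒬 (fun ω => |partialSum X (m + n) ω - partialSum X m ω| ^ r)
        ≤ K * (n : ℝ) ^ (r / 2) := by
  have hX (i : ℕ) : HasFiniteUpperExp 𝒬 (fun ω ↦ |X i ω| ^ r) := by
    simpa only [partialSum_add_succ_sub, add_zero, sub_self, zero_add] using hfin i 1
  have habs (i : ℕ) := (hX i).abs_of_rpow_abs hprob (by linarith)
  have hc := one_le_mul_sub_one_mul_two_rpow hr.le
  have hM : 0 ≤ upperExp 𝒬 (fun ω ↦ |X 0 ω| ^ r) := upperExp_nonneg fun ω ↦ by positivity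
  exact ⟨(upperExp 𝒬 (fun ω ↦ |X 0 ω| ^ r) + 1) * (2 * (r * (r - 1) * 2 ^ (r - 2))) ^ (r / 2),
    mul_pos (by linarith) (Real.rpow_pos_of_pos (by linarith) _), fun n _ m ↦
    (moment_bound_IID_general h𝒬 hprob hmeas hiid.2 hr.le
      (fun i ↦ (hiid.upperExp_comp_eq hmeas habs measurable_id (fun _ ↦ le_rfl) i).trans hmean)
      (fun i ↦ (hiid.upperExp_comp_eq hmeas habs measurable_neg (fun x ↦ (abs_neg x).le) i).trans
        hmean') hX
      (fun i ↦ (hiid.1 i (|·| ^ r) (by fun_prop) (hX i) hmom).le.trans (by linarith)) m n).2⟩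
end

section
/- Let X and Y be real random variables on (Ω, 𝒜) and suppose Y is independent of X under E̅ (Peng independence). Then X and Y are pairwise independent under both capacities V and v: for all Borel sets D, G ⊆ ℝ, V(X ∈ D, Y ∈ G) = V(X ∈ D) · V(Y ∈ G) and v(X ∈ D, Y ∈ G) = v(X ∈ D) · v(Y ∈ G). -/
open MeasureTheory Filter Topology

/-- Upper capacity `V(A) = sup_{P ∈ 𝒬} P(A)`. -/
noncomputable def capV {Ω : Type*} [MeasurableSpace Ω]
    (𝒬 : Set (Measure Ω)) (A : Set Ω) : ℝ :=
  sSup ((fun P : Measure Ω => (P A).toReal) '' 𝒬)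

/-- Lower capacity `v(A) = inf_{P ∈ 𝒬} P(A)`. -/
noncomputable def capv {Ω : Type*} [MeasurableSpace Ω]
    (𝒬 : Set (Measure Ω)) (A : Set Ω) : ℝ :=
  sInf ((fun P : Measure Ω => (P A).toReal) '' 𝒬)

/-!
Since `E̅` is positively homogeneous, Peng independence gives `E̅[g(X) k(Y)] = E̅[g(X) E̅[k(Y)]]`
for `g ≥ 0`. As `V(A) = E̅[1_A]` and `v(A) = -E̅[-1_A]`, both product formulas are instances with
`g = 1_D`: take `k = 1_G` for `V` and `k = -1_G` for `v`.
-/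

theorem abs_indicator_one_le {α : Type*} (s : Set α) (x : α) : |s.indicator (1 : α → ℝ) x| ≤ 1 := by
  simpa using norm_indicator_le_norm_self (s := s) (1 : α → ℝ) x

section UpperExpectation

variable {Ω : Type*} [MeasurableSpace Ω] {𝒬 : Set (Measure Ω)}

theorem upperExp_const_mul_of_nonneg {c : ℝ} (hc : 0 ≤ c) (X : Ω → ℝ) :
    upperExp 𝒬 (fun ω => c * X ω) = c * upperExp 𝒬 X := by
  simp only [upperExp, integral_const_mul]
  rw [← smul_eq_mul c (sSup _), ← Real.sSup_smul_of_nonneg hc, ← Set.image_smul, Set.image_image]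
  rfl

theorem upperExp_indicator_one {A : Set Ω} (hA : MeasurableSet A) :
    upperExp 𝒬 (A.indicator 1) = capV 𝒬 A := by
  simp only [upperExp, integral_indicator_one hA, capV, Measure.real]

theorem upperExp_neg_indicator_one {A : Set Ω} (hA : MeasurableSet A) :
    upperExp 𝒬 (-A.indicator 1) = -capv 𝒬 A := by
  simp only [upperExp, Pi.neg_apply, integral_neg, integral_indicator_one hA, capv, Measure.real,
    Real.sInf_def, neg_neg, ← Set.image_neg_eq_neg, Set.image_image]

theorem capV_nonneg (A : Set Ω) : 0 ≤ capV 𝒬 A :=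
  Real.sSup_nonneg <| Set.forall_mem_image.2 fun _ _ => ENNReal.toReal_nonneg

theorem capv_nonneg (A : Set Ω) : 0 ≤ capv 𝒬 A :=
  Real.sInf_nonneg <| Set.forall_mem_image.2 fun _ _ => ENNReal.toReal_nonneg

theorem HasFiniteUpperExp.const_mul_of_nonneg {X : Ω → ℝ} (hX : HasFiniteUpperExp 𝒬 X) {c : ℝ}
    (hc : 0 ≤ c) : HasFiniteUpperExp 𝒬 fun ω => c * X ω := by
  obtain ⟨integrable_X, C, hC⟩ := hX
  refine ⟨fun P hP => (integrable_X P hP).const_mul c, c * C, ?_⟩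
  refine Set.forall_mem_image.2 fun P hP => ?_
  rw [integral_const_mul]
  exact mul_le_mul_of_nonneg_left (hC ⟨P, hP, rfl⟩) hc

theorem HasFiniteUpperExp.of_bound (hprob : ∀ P ∈ 𝒬, IsProbabilityMeasure P) {X : Ω → ℝ}
    (hX : Measurable X) {C : ℝ} (hC : ∀ ω, |X ω| ≤ C) : HasFiniteUpperExp 𝒬 X := by
  have integrable_X : ∀ P ∈ 𝒬, Integrable X P := fun P hP =>
    have := hprob P hP
    .of_bound hX.aestronglyMeasurable C (.of_forall hC)
  refine ⟨integrable_X, C, Set.forall_mem_image.2 fun P hP => ?_⟩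
  have := hprob P hP
  calc ∫ ω, X ω ∂P ≤ ∫ _, C ∂P :=
        integral_mono (integrable_X P hP) (integrable_const C) fun ω => (abs_le.1 (hC ω)).2
    _ = C := by simp

end UpperExpectation

namespace PengIndep

variable {Ω : Type*} [MeasurableSpace Ω] {𝒬 : Set (Measure Ω)} {d : ℕ}
  {X : Ω → Fin d → ℝ} {Y : Ω → ℝ}

theorem upperExp_mul_s3 (hindep : PengIndep 𝒬 X Y) {g : (Fin d → ℝ) → ℝ} {k : ℝ → ℝ}
    (hg : Measurable g) (hk : Measurable k) (hg_nonneg : ∀ x, 0 ≤ g x)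
    (hgk_fin : HasFiniteUpperExp 𝒬 fun ω => g (X ω) * k (Y ω))
    (hk_fin : HasFiniteUpperExp 𝒬 fun ω => k (Y ω))
    (hg_fin : HasFiniteUpperExp 𝒬 fun ω => g (X ω) * upperExp 𝒬 fun ω' => k (Y ω')) :
    upperExp 𝒬 (fun ω => g (X ω) * k (Y ω)) =
      upperExp 𝒬 fun ω => g (X ω) * upperExp 𝒬 fun ω' => k (Y ω') := by
  have inner_upperExp (x : Fin d → ℝ) :
      upperExp 𝒬 (fun ω' => g x * k (Y ω')) = g x * upperExp 𝒬 fun ω' => k (Y ω') :=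
    upperExp_const_mul_of_nonneg (hg_nonneg x) _
  simp only [← inner_upperExp] at hg_fin ⊢
  exact hindep (fun x y => g x * k y) ((hg.comp measurable_fst).mul (hk.comp measurable_snd))
    hgk_fin (fun x => hk_fin.const_mul_of_nonneg (hg_nonneg x)) hg_fin

theorem upperExp_mul_of_bound (hprob : ∀ P ∈ 𝒬, IsProbabilityMeasure P) (hX : Measurable X)
    (hY : Measurable Y) (hindep : PengIndep 𝒬 X Y) {g : (Fin d → ℝ) → ℝ} {k : ℝ → ℝ}
    (hg : Measurable g) (hk : Measurable k) (hg_nonneg : ∀ x, 0 ≤ g x) {a b : ℝ}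
    (hga : ∀ x, g x ≤ a) (hkb : ∀ y, |k y| ≤ b) :
    upperExp 𝒬 (fun ω => g (X ω) * k (Y ω)) =
      upperExp 𝒬 fun ω => g (X ω) * upperExp 𝒬 fun ω' => k (Y ω') := by
  have abs_mul_le {x : Fin d → ℝ} {c C : ℝ} (hc : |c| ≤ C) : |g x * c| ≤ a * C := by
    rw [abs_mul, abs_of_nonneg (hg_nonneg x)]
    exact mul_le_mul (hga x) hc (abs_nonneg c) ((hg_nonneg x).trans (hga x))
  exact hindep.upperExp_mul_s3 hg hk hg_nonneg
    (.of_bound hprob ((hg.comp hX).mul (hk.comp hY)) fun ω => abs_mul_le (hkb (Y ω)))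
    (.of_bound hprob (hk.comp hY) fun ω => hkb (Y ω))
    (.of_bound hprob ((hg.comp hX).mul_const _) fun _ => abs_mul_le le_rfl)

theorem upperExp_indicator_mul (hprob : ∀ P ∈ 𝒬, IsProbabilityMeasure P) (hX : Measurable X)
    (hY : Measurable Y) (hindep : PengIndep 𝒬 X Y) {D : Set (Fin d → ℝ)} (hD : MeasurableSet D)
    {k : ℝ → ℝ} (hk : Measurable k) {b : ℝ} (hkb : ∀ y, |k y| ≤ b) :
    upperExp 𝒬 ((X ⁻¹' D).indicator 1 * k ∘ Y) =
      upperExp 𝒬 fun ω => (X ⁻¹' D).indicator 1 ω * upperExp 𝒬 (k ∘ Y) :=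
  hindep.upperExp_mul_of_bound hprob hX hY (g := D.indicator 1) (measurable_one.indicator hD) hk
    (Set.indicator_nonneg fun _ _ => zero_le_one)
    (fun x => (le_abs_self _).trans (abs_indicator_one_le D x)) hkb

theorem capV_inter_preimage (hprob : ∀ P ∈ 𝒬, IsProbabilityMeasure P) (hX : Measurable X)
    (hY : Measurable Y) (hindep : PengIndep 𝒬 X Y) {D : Set (Fin d → ℝ)} {G : Set ℝ}
    (hD : MeasurableSet D) (hG : MeasurableSet G) :
    capV 𝒬 (X ⁻¹' D ∩ Y ⁻¹' G) = capV 𝒬 (X ⁻¹' D) * capV 𝒬 (Y ⁻¹' G) := by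
  calc capV 𝒬 (X ⁻¹' D ∩ Y ⁻¹' G)
      = upperExp 𝒬 ((X ⁻¹' D).indicator 1 * (Y ⁻¹' G).indicator 1) := by
        rw [← upperExp_indicator_one ((hX hD).inter (hY hG)), Set.inter_indicator_one]
    _ = upperExp 𝒬 fun ω => (X ⁻¹' D).indicator 1 ω * upperExp 𝒬 ((Y ⁻¹' G).indicator 1) :=
        hindep.upperExp_indicator_mul hprob hX hY hD (k := G.indicator 1) (b := 1)
          (measurable_one.indicator hG) (abs_indicator_one_le G)
    _ = upperExp 𝒬 fun ω => capV 𝒬 (Y ⁻¹' G) * (X ⁻¹' D).indicator 1 ω := by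
        simp only [upperExp_indicator_one (hY hG), mul_comm]
    _ = capV 𝒬 (X ⁻¹' D) * capV 𝒬 (Y ⁻¹' G) := by
        rw [upperExp_const_mul_of_nonneg (capV_nonneg _), upperExp_indicator_one (hX hD), mul_comm]

theorem capv_inter_preimage (hprob : ∀ P ∈ 𝒬, IsProbabilityMeasure P) (hX : Measurable X)
    (hY : Measurable Y) (hindep : PengIndep 𝒬 X Y) {D : Set (Fin d → ℝ)} {G : Set ℝ}
    (hD : MeasurableSet D) (hG : MeasurableSet G) :
    capv 𝒬 (X ⁻¹' D ∩ Y ⁻¹' G) = capv 𝒬 (X ⁻¹' D) * capv 𝒬 (Y ⁻¹' G) := by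
  refine neg_injective ?_
  calc -capv 𝒬 (X ⁻¹' D ∩ Y ⁻¹' G)
      = upperExp 𝒬 ((X ⁻¹' D).indicator 1 * -(Y ⁻¹' G).indicator 1) := by
        rw [← upperExp_neg_indicator_one ((hX hD).inter (hY hG)), Set.inter_indicator_one, mul_neg]
    _ = upperExp 𝒬 fun ω => (X ⁻¹' D).indicator 1 ω * upperExp 𝒬 (-(Y ⁻¹' G).indicator 1) :=
        hindep.upperExp_indicator_mul hprob hX hY hD (k := -G.indicator 1) (b := 1)
          (measurable_one.indicator hG).neg fun y => (abs_neg _).trans_le (abs_indicator_one_le G y)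
    _ = upperExp 𝒬 fun ω => capv 𝒬 (Y ⁻¹' G) * (-(X ⁻¹' D).indicator 1) ω := by
        simp only [upperExp_neg_indicator_one (hY hG), Pi.neg_apply, mul_neg, neg_mul, mul_comm]
    _ = -(capv 𝒬 (X ⁻¹' D) * capv 𝒬 (Y ⁻¹' G)) := by
        rw [upperExp_const_mul_of_nonneg (capv_nonneg _), upperExp_neg_indicator_one (hX hD),
          mul_neg, mul_comm]

end PengIndep

theorem peng_indep_implies_pairwise_indep_general {Ω : Type*} [MeasurableSpace Ω]
    (𝒬 : Set (Measure Ω)) (_h𝒬 : 𝒬.Nonempty)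
    (hprob : ∀ P ∈ 𝒬, IsProbabilityMeasure P) {d : ℕ}
    (X : Ω → Fin d → ℝ) (Y : Ω → ℝ) (hX : Measurable X) (hY : Measurable Y)
    (hindep : PengIndep 𝒬 X Y) :
    ∀ (D : Set (Fin d → ℝ)) (G : Set ℝ), MeasurableSet D → MeasurableSet G →
      capV 𝒬 {ω | X ω ∈ D ∧ Y ω ∈ G} = capV 𝒬 (X ⁻¹' D) * capV 𝒬 (Y ⁻¹' G) ∧
      capv 𝒬 {ω | X ω ∈ D ∧ Y ω ∈ G} = capv 𝒬 (X ⁻¹' D) * capv 𝒬 (Y ⁻¹' G) :=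
  fun _ _ hD hG => ⟨hindep.capV_inter_preimage hprob hX hY hD hG,
    hindep.capv_inter_preimage hprob hX hY hD hG⟩

/-- **Lemma 2.2.** If `Y` is Peng-independent of `X` under the upper expectation,
then `X` and `Y` are pairwise independent under both capacities `V` and `v`. -/
theorem peng_indep_implies_pairwise_indep {Ω : Type*} [MeasurableSpace Ω]
    (𝒬 : Set (Measure Ω)) (h𝒬 : 𝒬.Nonempty)
    (hprob : ∀ P ∈ 𝒬, IsProbabilityMeasure P)
    (X Y : Ω → ℝ) (hX : Measurable X) (hY : Measurable Y)
    (hindep : PengIndep 𝒬 (fun ω (_ : Fin 1) => X ω) Y) :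
    ∀ D G : Set ℝ, MeasurableSet D → MeasurableSet G →
      capV 𝒬 {ω | X ω ∈ D ∧ Y ω ∈ G} = capV 𝒬 (X ⁻¹' D) * capV 𝒬 (Y ⁻¹' G) ∧
      capv 𝒬 {ω | X ω ∈ D ∧ Y ω ∈ G} = capv 𝒬 (X ⁻¹' D) * capv 𝒬 (Y ⁻¹' G) :=
  fun _ _ hD hG => peng_indep_implies_pairwise_indep_general 𝒬 h𝒬 hprob _ Y
    (measurable_pi_lambda _ fun _ => hX) hY hindep _ _ (measurable_pi_apply 0 hD) hG
end

section
/- Let θ be a natural number with θ ≥ 2 and let γ ∈ (0,1]. Then for all real numbers a and b, |a + b|^{θ+γ} ≤ |a|^{θ+γ} + |b|^{θ+γ} + 2^{θ+1} (|a|^γ |b|^θ + |a|^θ |b|^γ). -/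
/-!
By homogeneity and symmetry one may divide by the larger of the two norms, which leaves a bound on
`(1 + t) ^ p` for `t ∈ [0, 1]`, where `p = s + γ`. If `1 ≤ p`, comparing the convex function
`u ↦ u ^ p` with its chord over `[1, 2]` gives `(1 + t) ^ p ≤ 1 + 2 ^ p * t`; if `p ≤ 1`, already
`(1 + t) ^ p ≤ 1 + t`. Finally `t ≤ t ^ γ` because `γ ≤ 1`. Only one of the two mixed terms is
needed, according to which norm is larger.
-/

lemma one_add_rpow_le_one_add_two_rpow_mul {p t : ℝ} (hp : 0 ≤ p) (ht₀ : 0 ≤ t) (ht₁ : t ≤ 1) :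
    (1 + t) ^ p ≤ 1 + 2 ^ p * t := by
  rcases le_total p 1 with hp₁ | hp₁
  · calc (1 + t) ^ p ≤ 1 + t := Real.rpow_le_self_of_one_le (by linarith) hp₁
      _ ≤ 1 + 2 ^ p * t := by
        gcongr
        exact le_mul_of_one_le_left ht₀ (Real.one_le_rpow one_le_two hp)
  · have chord : ((1 - t) * 1 + t * 2) ^ p ≤ (1 - t) * 1 ^ p + t * 2 ^ p :=
      (convexOn_rpow hp₁).2 (Set.mem_Ici.2 zero_le_one) (Set.mem_Ici.2 zero_le_two)
        (sub_nonneg.2 ht₁) ht₀ (sub_add_cancel 1 t)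
    calc (1 + t) ^ p = ((1 - t) * 1 + t * 2) ^ p := by ring_nf
      _ ≤ (1 - t) * 1 ^ p + t * 2 ^ p := chord
      _ ≤ 1 + 2 ^ p * t := by
        rw [Real.one_rpow]
        linarith

lemma add_rpow_add_le_of_le {s γ x y : ℝ} (hsγ : 0 ≤ s + γ) (hγ : γ ≤ 1) (hy : 0 ≤ y)
    (hyx : y ≤ x) :
    (x + y) ^ (s + γ) ≤ x ^ (s + γ) + 2 ^ (s + γ) * (x ^ s * y ^ γ) := by
  rcases (hy.trans hyx).eq_or_lt with rfl | hx
  · obtain rfl : y = 0 := le_antisymm hyx hy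
    rw [add_zero]
    exact le_add_of_nonneg_right (by positivity)
  obtain ⟨t, rfl⟩ : ∃ t, y = x * t := ⟨y / x, (mul_div_cancel₀ y hx.ne').symm⟩
  have ht₀ : 0 ≤ t := nonneg_of_mul_nonneg_right hy hx
  have ht₁ : t ≤ 1 := le_of_mul_le_mul_left (by rwa [mul_one]) hx
  calc (x + x * t) ^ (s + γ) = x ^ (s + γ) * (1 + t) ^ (s + γ) := by
        rw [← Real.mul_rpow hx.le (by positivity), mul_one_add]
    _ ≤ x ^ (s + γ) * (1 + 2 ^ (s + γ) * t ^ γ) := by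
        gcongr
        calc (1 + t) ^ (s + γ) ≤ 1 + 2 ^ (s + γ) * t :=
              one_add_rpow_le_one_add_two_rpow_mul hsγ ht₀ ht₁
          _ ≤ 1 + 2 ^ (s + γ) * t ^ γ := by
              gcongr
              exact Real.self_le_rpow_of_le_one ht₀ ht₁ hγ
    _ = x ^ (s + γ) + 2 ^ (s + γ) * (x ^ s * (x * t) ^ γ) := by
        rw [Real.mul_rpow hx.le ht₀, Real.rpow_add hx]
        ring

lemma add_rpow_add_le {s γ x y : ℝ} (hsγ : 0 ≤ s + γ) (hγ : γ ≤ 1) (hx : 0 ≤ x) (hy : 0 ≤ y) :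
    (x + y) ^ (s + γ) ≤
      x ^ (s + γ) + y ^ (s + γ) + 2 ^ (s + γ) * (x ^ γ * y ^ s + x ^ s * y ^ γ) := by
  wlog hyx : y ≤ x generalizing x y
  · have h := this hy hx (le_of_not_ge hyx)
    rw [add_comm y x] at h
    linarith
  calc (x + y) ^ (s + γ) ≤ x ^ (s + γ) + 2 ^ (s + γ) * (x ^ s * y ^ γ) :=
        add_rpow_add_le_of_le hsγ hγ hy hyx
    _ ≤ x ^ (s + γ) + y ^ (s + γ) + 2 ^ (s + γ) * (x ^ γ * y ^ s + x ^ s * y ^ γ) := by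
        gcongr
        · exact le_add_of_nonneg_right (by positivity)
        · exact le_add_of_nonneg_left (by positivity)

theorem abs_add_rpow_le_general {E : Type*} [SeminormedAddGroup E] {s γ : ℝ} (hsγ : 0 ≤ s + γ)
    (hγ : γ ≤ 1) (a b : E) :
    ‖a + b‖ ^ (s + γ) ≤
      ‖a‖ ^ (s + γ) + ‖b‖ ^ (s + γ) +
        2 ^ (s + 1) * (‖a‖ ^ γ * ‖b‖ ^ s + ‖a‖ ^ s * ‖b‖ ^ γ) := by
  calc ‖a + b‖ ^ (s + γ) ≤ (‖a‖ + ‖b‖) ^ (s + γ) := by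
        gcongr
        exact norm_add_le a b
    _ ≤ ‖a‖ ^ (s + γ) + ‖b‖ ^ (s + γ) +
          2 ^ (s + γ) * (‖a‖ ^ γ * ‖b‖ ^ s + ‖a‖ ^ s * ‖b‖ ^ γ) :=
        add_rpow_add_le hsγ hγ (norm_nonneg a) (norm_nonneg b)
    _ ≤ ‖a‖ ^ (s + γ) + ‖b‖ ^ (s + γ) +
          2 ^ (s + 1) * (‖a‖ ^ γ * ‖b‖ ^ s + ‖a‖ ^ s * ‖b‖ ^ γ) := by
        gcongr
        exact one_le_two

/-- Elementary inequality (*): for a natural number `θ ≥ 2` and `γ ∈ (0,1]`,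
`|a + b|^{θ+γ} ≤ |a|^{θ+γ} + |b|^{θ+γ} + 2^{θ+1}(|a|^γ |b|^θ + |a|^θ |b|^γ)`. -/
theorem abs_add_rpow_le (θ : ℕ) (hθ : 2 ≤ θ) (γ : ℝ) (hγ0 : 0 < γ) (hγ1 : γ ≤ 1)
    (a b : ℝ) :
    |a + b| ^ ((θ : ℝ) + γ) ≤
      |a| ^ ((θ : ℝ) + γ) + |b| ^ ((θ : ℝ) + γ) +
        (2 : ℝ) ^ (θ + 1) *
          (|a| ^ γ * |b| ^ (θ : ℝ) + |a| ^ (θ : ℝ) * |b| ^ γ) := by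
  exact_mod_cast abs_add_rpow_le_general (s := θ) (by positivity) hγ1 a b
end

section
/- Let r > 2, write r = θ + γ with θ a natural number, θ ≥ 2, and γ ∈ (0,1], and let C > 0. Let (a_n)_{n≥1} be a sequence of nonnegative real numbers satisfying a_{2n} ≤ 2 a_n + C · a_n^{1−γ} · n^{γ r / 2} for all n ≥ 1. Then there exists a constant C' > 0 such that a_{2^k} ≤ C' · 2^{k r / 2} for all integers k ≥ 0. -/
/-! A geometric sequence `k ↦ M * q ^ k` is a supersolution of the recursion
`u (k + 1) = l * u k + C * u k ^ (1 - γ) * (q ^ k) ^ γ` precisely when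
`l * M + C * M ^ (1 - γ) ≤ q * M`, because the right-hand side is homogeneous of degree one in
`(u k, q ^ k)`. As `l < q` and `γ > 0`, every large `M` satisfies this, and since the right-hand
side is nondecreasing in `u k` for `γ ≤ 1`, a supersolution that starts above `u 0` stays above
`u`. Along powers of two, `u k = a (2 ^ k)`, `l = 2` and `q = 2 ^ (r / 2)`, which exceeds `2`
because `r > 2`. -/

open Filter

lemma mul_rpow_one_sub_mul_rpow {M x : ℝ} (γ : ℝ) (hM : 0 ≤ M) (hx : 0 < x) :
    (M * x) ^ (1 - γ) * x ^ γ = M ^ (1 - γ) * x := by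
  rw [Real.mul_rpow hM hx.le, mul_assoc, ← Real.rpow_add hx, sub_add_cancel, Real.rpow_one]

lemma eventually_mul_add_mul_rpow_one_sub_le {l q γ : ℝ} (C : ℝ) (hlq : l < q) (hγ : 0 < γ) :
    ∀ᶠ M : ℝ in atTop, l * M + C * M ^ (1 - γ) ≤ q * M := by
  filter_upwards [(tendsto_rpow_atTop hγ).eventually_ge_atTop (C / (q - l)),
    eventually_gt_atTop 0] with M hCM hM
  have hC : C ≤ M ^ γ * (q - l) := (div_le_iff₀ (sub_pos.2 hlq)).1 hCM
  calc l * M + C * M ^ (1 - γ)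
      ≤ l * M + M ^ γ * (q - l) * M ^ (1 - γ) := by gcongr
    _ = l * M + (q - l) * (M ^ γ * M ^ (1 - γ)) := by ring
    _ = q * M := by
      rw [← Real.rpow_add hM, add_sub_cancel, Real.rpow_one]
      ring

section GeometricRecursion

variable {u : ℕ → ℝ} {l q γ C : ℝ}

lemma le_mul_pow_of_sublinear_recursion {M : ℝ} (hl : 0 ≤ l) (hq : 0 < q) (hγ : γ ≤ 1)
    (hC : 0 ≤ C) (hM : 0 ≤ M) (hMq : l * M + C * M ^ (1 - γ) ≤ q * M)
    (hu : ∀ k, 0 ≤ u k) (hu₀ : u 0 ≤ M)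
    (hrec : ∀ k, u (k + 1) ≤ l * u k + C * u k ^ (1 - γ) * (q ^ k) ^ γ) (k : ℕ) :
    u k ≤ M * q ^ k := by
  induction k with
  | zero => simpa using hu₀
  | succ k ih =>
    have hpow : u k ^ (1 - γ) ≤ (M * q ^ k) ^ (1 - γ) :=
      Real.rpow_le_rpow (hu k) ih (sub_nonneg.2 hγ)
    calc u (k + 1) ≤ l * u k + C * u k ^ (1 - γ) * (q ^ k) ^ γ := hrec k
      _ ≤ l * (M * q ^ k) + C * (M * q ^ k) ^ (1 - γ) * (q ^ k) ^ γ := by gcongr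
      _ = (l * M + C * M ^ (1 - γ)) * q ^ k := by
        rw [mul_assoc C, mul_rpow_one_sub_mul_rpow γ hM (pow_pos hq k)]
        ring
      _ ≤ q * M * q ^ k := by gcongr
      _ = M * q ^ (k + 1) := by ring

theorem exists_le_mul_pow_of_sublinear_recursion (hl : 0 ≤ l) (hlq : l < q) (hγ₀ : 0 < γ)
    (hγ₁ : γ ≤ 1) (hC : 0 ≤ C) (hu : ∀ k, 0 ≤ u k)
    (hrec : ∀ k, u (k + 1) ≤ l * u k + C * u k ^ (1 - γ) * (q ^ k) ^ γ) :
    ∃ M : ℝ, 0 < M ∧ ∀ k, u k ≤ M * q ^ k := by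
  obtain ⟨M, hMq, hu₀, hM⟩ := ((eventually_mul_add_mul_rpow_one_sub_le C hlq hγ₀).and
    ((eventually_ge_atTop (u 0)).and (eventually_gt_atTop 0))).exists
  exact ⟨M, hM,
    le_mul_pow_of_sublinear_recursion hl (hl.trans_lt hlq) hγ₁ hC hM.le hMq hu hu₀ hrec⟩

end GeometricRecursion

theorem dyadic_bound_of_recursion_general {b : ℕ} {l s γ C : ℝ} {a : ℕ → ℝ} (hb : 1 ≤ b)
    (hl : 0 ≤ l) (hls : l < (b : ℝ) ^ s) (hγ₀ : 0 < γ) (hγ₁ : γ ≤ 1) (hC : 0 ≤ C)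
    (ha : ∀ n : ℕ, 1 ≤ n → 0 ≤ a n)
    (hrec : ∀ n : ℕ, 1 ≤ n → a (b * n) ≤ l * a n + C * a n ^ (1 - γ) * (n : ℝ) ^ (γ * s)) :
    ∃ C' : ℝ, 0 < C' ∧ ∀ k : ℕ, a (b ^ k) ≤ C' * (b : ℝ) ^ (k * s) := by
  have hpow (k : ℕ) : ((b : ℝ) ^ s) ^ k = (b : ℝ) ^ (k * s) := by
    rw [← Real.rpow_mul_natCast b.cast_nonneg, mul_comm]
  have hscale (k : ℕ) : ((b ^ k : ℕ) : ℝ) ^ (γ * s) = (((b : ℝ) ^ s) ^ k) ^ γ := by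
    rw [mul_comm γ, Real.rpow_mul (Nat.cast_nonneg _), Nat.cast_pow,
      Real.rpow_pow_comm b.cast_nonneg]
  have hbk (k : ℕ) : 1 ≤ b ^ k := Nat.one_le_pow k b hb
  simp only [← hpow]
  refine exists_le_mul_pow_of_sublinear_recursion hl hls hγ₀ hγ₁ hC (fun k ↦ ha _ (hbk k))
    fun k ↦ ?_
  rw [pow_succ', ← hscale]
  exact hrec _ (hbk k)

/-- If a nonnegative sequence satisfies the recursion
`a_{2n} ≤ 2 a_n + C a_n^{1-γ} n^{γ r / 2}` (where `r = θ + γ > 2`, `θ ∈ ℕ`, `θ ≥ 2`,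
`γ ∈ (0,1]`, `C > 0`), then `a_{2^k} ≤ C' 2^{k r / 2}` for some constant `C' > 0`. -/
theorem dyadic_bound_of_recursion (r γ C : ℝ) (θ : ℕ) (hθ : 2 ≤ θ)
    (hγ0 : 0 < γ) (hγ1 : γ ≤ 1) (hr : 2 < r) (hrθγ : r = (θ : ℝ) + γ) (hC : 0 < C)
    (a : ℕ → ℝ) (ha0 : ∀ n : ℕ, 1 ≤ n → 0 ≤ a n)
    (hrec : ∀ n : ℕ, 1 ≤ n →
      a (2 * n) ≤ 2 * a n + C * a n ^ (1 - γ) * (n : ℝ) ^ (γ * r / 2)) :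
    ∃ C' : ℝ, 0 < C' ∧ ∀ k : ℕ, a (2 ^ k) ≤ C' * (2 : ℝ) ^ ((k : ℝ) * r / 2) := by
  have h2r : (2 : ℝ) < ((2 : ℕ) : ℝ) ^ (r / 2) :=
    Real.self_lt_rpow_of_one_lt (by norm_num) (by linarith)
  simpa [mul_div_assoc] using
    dyadic_bound_of_recursion_general one_le_two zero_le_two h2r hγ0 hγ1 hC.le ha0
      (by simpa only [mul_div_assoc] using hrec)
end
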